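/- Let L be a linear order and let n,k ≥ 1. Define f : L^{nk} → L by f(x_{11},…,x_{1k},…,x_{n1},…,x_{nk}) := max_{1≤i≤n} min_{1≤j≤k} x_{ij}. Then (a) f is k-block symmetric and k-absorptive; and (b) f is strictly monotone in the sense that if x_{ij} < y_{ij} for all i,j then f(x) < f(y); consequently f is a k-absorptive polymorphism of arity nk of the directed graph (L, <), and in particular of every transitive tournament T_m = ({1,…,m}, <). -/

import Mathlib

/-!
For every `c`, the inequality `c ≤ max_i min_j x i j` says that `c` is a lower bound of the set of
entries of some block (`le_supInf_iff`). The right-hand side depends only on the collection of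
these sets, which gives block symmetry, and replacing a block by another one whose set of entries
is smaller does not change it, since lower bounds of the larger set bound the smaller one; this
gives absorption. Strict monotonicity holds because both the maximum and the minimum of finite
nonempty families in a linear order are attained (`supInf_lt_supInf`). Being a polymorphism of
`(L, <)` is the same as being strictly monotone.
-/

structure RelStruct (σ : Type) (ar : σ → ℕ) (B : Type) where
  rel : ∀ s : σ, Set (Fin (ar s) → B)

/-- `h` is a homomorphism from the structure `SA` to the structure `SB`. -/
def IsHom {σ : Type} {ar : σ → ℕ} {A B : Type}
    (SA : RelStruct σ ar A) (SB : RelStruct σ ar B) (h : A → B) : Prop :=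
  ∀ (s : σ) (t : Fin (ar s) → A), t ∈ SA.rel s → (fun i => h (t i)) ∈ SB.rel s

/-- `f` is a polymorphism of `S` whose arguments are indexed by the type `I`
(for `I = Fin n × Fin k` this is a polymorphism of arity `n * k`). -/
def IsPolyIdx {σ : Type} {ar : σ → ℕ} {B : Type} (S : RelStruct σ ar B)
    {I : Type} (f : (I → B) → B) : Prop :=
  ∀ (s : σ) (t : I → Fin (ar s) → B),
    (∀ i, t i ∈ S.rel s) → (fun j => f fun i => t i j) ∈ S.rel s

/-- a ternary operation written in curried form is a polymorphism of `S`. -/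
def IsPoly3 {σ : Type} {ar : σ → ℕ} {B : Type} (S : RelStruct σ ar B)
    (m : B → B → B → B) : Prop :=
  ∀ (s : σ) (t₁ t₂ t₃ : Fin (ar s) → B), t₁ ∈ S.rel s → t₂ ∈ S.rel s → t₃ ∈ S.rel s →
    (fun j => m (t₁ j) (t₂ j) (t₃ j)) ∈ S.rel s

/-- a quasi Maltsev operation: `m x x y = m y x x = m y y y`. -/
def IsQuasiMaltsev {B : Type} (m : B → B → B → B) : Prop :=
  ∀ x y, m x x y = m y x x ∧ m y x x = m y y y

/-- An operation of arity `n * k` (arguments grouped into `n` blocks of length `k`,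
presented as a matrix `Fin n → Fin k → B`) is `k`-block symmetric if its value only
depends on the multiset of sets of entries of the blocks. -/
def BlockSym {B : Type} (n k : ℕ) (f : (Fin n → Fin k → B) → B) : Prop :=
  ∀ x y : Fin n → Fin k → B,
    Multiset.map (fun i => Set.range (x i)) Finset.univ.val =
      Multiset.map (fun i => Set.range (y i)) Finset.univ.val →
    f x = f y

/-- A `k`-block symmetric operation is `k`-absorptive if
`f(S₁,S₂,S₃,…,Sₙ) = f(S₂,S₂,S₃,…,Sₙ)` whenever `S₂ ⊆ S₁` (stated here for an
arbitrary pair of distinct blocks, which by block symmetry is equivalent). -/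
def IsAbsorptive {B : Type} (n k : ℕ) (f : (Fin n → Fin k → B) → B) : Prop :=
  BlockSym n k f ∧
  ∀ (x : Fin n → Fin k → B) (i j : Fin n), i ≠ j →
    Set.range (x j) ⊆ Set.range (x i) → f x = f (Function.update x i (x j))

/-- A block operation (matrix form `Fin n → Fin k → B`) is a polymorphism of arity
`n * k` of `S`, identifying `B^(n·k)` with `Fin n × Fin k → B`. -/
def IsBlockPoly {σ : Type} {ar : σ → ℕ} {B : Type} (S : RelStruct σ ar B)
    (n k : ℕ) (f : (Fin n → Fin k → B) → B) : Prop :=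
  IsPolyIdx S (fun v : Fin n × Fin k → B => f fun i j => v (i, j))

/-- The directed graph `(L, <)`, viewed as a relational structure with one binary
relation. For `L = Fin m` this is the transitive tournament `T_m`. -/
def ltDigraph (L : Type) [LT L] : RelStruct Unit (fun _ => 2) L :=
  ⟨fun _ => {t | t 0 < t 1}⟩

/-- `f(x₁₁,…,x_{nk}) = max_i min_j x_{ij}` on a linear order, in block matrix form. -/
def supInf (L : Type) [LinearOrder L] (n k : ℕ) (hn : 0 < n) (hk : 0 < k)
    (x : Fin n → Fin k → L) : L :=
  Finset.univ.sup' ⟨⟨0, hn⟩, Finset.mem_univ _⟩ fun i =>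
    Finset.univ.inf' ⟨⟨0, hk⟩, Finset.mem_univ _⟩ (x i)

/-- Membership in the lower set of `max_i min_j x i j`, in terms of the sets of entries of the
blocks only. -/
theorem le_supInf_iff {L : Type} [LinearOrder L] {n k : ℕ} (hn : 0 < n) (hk : 0 < k)
    (x : Fin n → Fin k → L) (c : L) :
    c ≤ supInf L n k hn hk x ↔ ∃ i, c ∈ lowerBounds (Set.range (x i)) := by
  refine (Finset.le_sup'_iff _).trans ?_
  simp only [Finset.mem_univ, true_and]
  refine exists_congr fun i => (Finset.le_inf'_iff _ _).trans ?_
  simp [lowerBounds]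

theorem supInf_lt_supInf {L : Type} [LinearOrder L] {n k : ℕ} (hn : 0 < n) (hk : 0 < k)
    {x y : Fin n → Fin k → L} (h : ∀ i j, x i j < y i j) :
    supInf L n k hn hk x < supInf L n k hn hk y := by
  refine (Finset.sup'_lt_iff _).2 fun i _ => (Finset.lt_sup'_iff _).2 ⟨i, Finset.mem_univ i, ?_⟩
  exact (Finset.lt_inf'_iff _).2 fun j hj => (Finset.inf'_lt_iff _).2 ⟨j, hj, h i j⟩

theorem isBlockPoly_supInf (L : Type) [LinearOrder L] {n k : ℕ} (hn : 0 < n) (hk : 0 < k) :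
    IsBlockPoly (ltDigraph L) n k (supInf L n k hn hk) :=
  fun _ _ ht => supInf_lt_supInf hn hk fun i j => ht (i, j)

theorem isAbsorptive_supInf (L : Type) [LinearOrder L] {n k : ℕ} (hn : 0 < n) (hk : 0 < k) :
    IsAbsorptive n k (supInf L n k hn hk) := by
  refine ⟨fun x y h => eq_of_forall_le_iff fun c => ?_,
    fun x i j hij h => eq_of_forall_le_iff fun c => ?_⟩
  · have key : ∀ z : Fin n → Fin k → L, (∃ i, c ∈ lowerBounds (Set.range (z i))) ↔
        ∃ S ∈ Multiset.map (fun i => Set.range (z i)) Finset.univ.val, c ∈ lowerBounds S := by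
      simp
    rw [le_supInf_iff, le_supInf_iff, key, key, h]
  · rw [le_supInf_iff, le_supInf_iff]
    constructor
    · rintro ⟨l, hl⟩
      rcases eq_or_ne l i with rfl | hli
      · exact ⟨l, by simpa only [Function.update_self] using lowerBounds_mono_set h hl⟩
      · exact ⟨l, by rwa [Function.update_of_ne hli]⟩
    · rintro ⟨l, hl⟩
      rcases eq_or_ne l i with rfl | hli
      · exact ⟨j, by rwa [Function.update_self] at hl⟩
      · exact ⟨l, by rwa [Function.update_of_ne hli] at hl⟩

/-- Theorem: on a linear order `L`, the operation `max_i min_j x_{ij}` is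
(a) `k`-block symmetric and `k`-absorptive, (b) strictly monotone, and consequently a
`k`-absorptive polymorphism of arity `n * k` of the digraph `(L, <)`, in particular of
every transitive tournament `T_m = (Fin m, <)`. -/
theorem supInf_absorptive_polymorphism (L : Type) [LinearOrder L]
    (n k : ℕ) (hn : 0 < n) (hk : 0 < k) :
    IsAbsorptive n k (supInf L n k hn hk) ∧
    (∀ x y : Fin n → Fin k → L, (∀ i j, x i j < y i j) →
      supInf L n k hn hk x < supInf L n k hn hk y) ∧
    IsBlockPoly (ltDigraph L) n k (supInf L n k hn hk) ∧
    ∀ m : ℕ, 0 < m →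
      IsBlockPoly (ltDigraph (Fin m)) n k (supInf (Fin m) n k hn hk) :=
  ⟨isAbsorptive_supInf L hn hk, fun _ _ h => supInf_lt_supInf hn hk h,
    isBlockPoly_supInf L hn hk, fun m _ => isBlockPoly_supInf (Fin m) hn hk⟩
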